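/- For every closed term M of Λ⊕, Φ(⟦M⟧n) = ⟦⌈M⌉(λx.x)⟧v: the pushforward along Φ of the call-by-name small-step semantics of M equals the call-by-value small-step semantics of the call-by-name CPS translation of M applied to the identity continuation. -/

import Mathlib

open scoped ENNReal

/-- Terms of Λ⊕ (and of Λ⊕⁺), in de Bruijn notation: variables, abstractions,
applications and binary (probabilistic) sums.  De Bruijn indices realize
"terms up to renaming of bound variables". -/
inductive Term : Type
  | var : ℕ → Term
  | lam : Term → Term
  | app : Term → Term → Term
  | choice : Term → Term → Term
  deriving DecidableEq

namespace Term

/-- Values: variables and abstractions. -/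
inductive IsValue : Term → Prop
  | var (n : ℕ) : IsValue (var n)
  | lam (M : Term) : IsValue (lam M)

/-- Boolean value test. -/
def isVal : Term → Bool
  | var _ => true
  | lam _ => true
  | _ => false

/-- Shifting of de Bruijn indices: add `d` to all indices `≥ c`. -/
def shift (d c : ℕ) : Term → Term
  | var n => if n < c then var n else var (n + d)
  | lam M => lam (shift d (c + 1) M)
  | app M N => app (shift d c M) (shift d c N)
  | choice M N => choice (shift d c M) (shift d c N)

/-- Capture-avoiding substitution `M[j := N]` (the variable `j` is consumed and
higher indices are decremented, as in a β-step). -/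
def subst : Term → ℕ → Term → Term
  | var n, j, N => if n = j then shift j 0 N else if j < n then var (n - 1) else var n
  | lam M, j, N => lam (subst M (j + 1) N)
  | app M L, j, N => app (subst M j N) (subst L j N)
  | choice M L, j, N => choice (subst M j N) (subst L j N)

/-- All free indices are `< n`. -/
def closedUnder : Term → ℕ → Prop
  | var m, n => m < n
  | lam M, n => closedUnder M (n + 1)
  | app M N, n => closedUnder M n ∧ closedUnder N n
  | choice M N, n => closedUnder M n ∧ closedUnder N n

/-- Closed terms: no free variables. -/
def Closed (M : Term) : Prop := closedUnder M 0

end Term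

/-- (Sub)distributions are represented as functions from terms into `ℝ≥0∞`;
genuine distributions (`IsDist`) are supported on values and have mass `≤ 1`. -/
abbrev PDist := Term → ℝ≥0∞

/-- The sum (total mass) `Σ𝒟` of a distribution. -/
noncomputable def dsum (D : PDist) : ℝ≥0∞ := ∑' M, D M

/-- The support of a distribution. -/
def dsupp (D : PDist) : Set Term := {M | D M ≠ 0}

/-- The everywhere-zero distribution `∅`. -/
noncomputable def dzero : PDist := fun _ => 0

/-- The Dirac distribution `{V^1}`. -/
noncomputable def dirac (V : Term) : PDist := fun M => if M = V then 1 else 0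

/-- Being a genuine (sub)probability distribution: supported on values, with
total mass at most one. -/
def IsDist (D : PDist) : Prop := (∀ M, D M ≠ 0 → M.IsValue) ∧ dsum D ≤ 1

/-- Call-by-value reduction `↦v`, relating a term to the (equiprobable) finite
sequence of its possible reducts. -/
inductive RedV : Term → List Term → Prop
  | beta {M V : Term} : V.IsValue → RedV (.app (.lam M) V) [M.subst 0 V]
  | choice {V W : Term} : V.IsValue → W.IsValue → RedV (.choice V W) [V, W]
  | appL {M N : Term} {Ls : List Term} :
      RedV M Ls → RedV (.app M N) (Ls.map (fun L => .app L N))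
  | appR {V M : Term} {Ns : List Term} :
      V.IsValue → RedV M Ns → RedV (.app V M) (Ns.map (fun L => .app V L))
  | choiceL {M N : Term} {Ls : List Term} :
      RedV M Ls → RedV (.choice M N) (Ls.map (fun L => .choice L N))
  | choiceR {V M : Term} {Ns : List Term} :
      V.IsValue → RedV M Ns → RedV (.choice V M) (Ns.map (fun L => .choice V L))

/-- Call-by-name reduction `↦n`. -/
inductive RedN : Term → List Term → Prop
  | beta {M N : Term} : RedN (.app (.lam M) N) [M.subst 0 N]
  | choice {M N : Term} : RedN (.choice M N) [M, N]
  | appL {M N : Term} {Ls : List Term} :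
      RedN M Ls → RedN (.app M N) (Ls.map (fun L => .app L N))

/-- The inductive small-step convergence relation `⇒`, parametric in the
underlying reduction relation: any term evaluates to `∅`; a value `V`
evaluates to `{V^1}`; and if `M ↦ N₁,…,Nₙ` and `Nᵢ ⇒ 𝒟ᵢ` then
`M ⇒ Σᵢ (1/n)𝒟ᵢ`. -/
inductive Conv (Red : Term → List Term → Prop) : Term → PDist → Prop
  | bot (M : Term) : Conv Red M dzero
  | val {V : Term} : V.IsValue → Conv Red V (dirac V)
  | step {M : Term} {Ns : List Term} (Ds : Fin Ns.length → PDist) :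
      Red M Ns → (∀ i, Conv Red (Ns.get i) (Ds i)) →
      Conv Red M (fun W => (∑ i, Ds i W) / (Ns.length : ℝ≥0∞))

/-- Call-by-value small-step convergence `⇒v`. -/
def SmallV : Term → PDist → Prop := Conv RedV

/-- Call-by-name small-step convergence `⇒n`. -/
def SmallN : Term → PDist → Prop := Conv RedN

/-- The small-step semantics `⟦M⟧`: the pointwise supremum of all distributions
derivable for `M`. -/
noncomputable def semOf (S : Term → PDist → Prop) (M : Term) : PDist :=
  fun W => ⨆ (D : PDist) (_ : S M D), D W

/-- Call-by-value small-step semantics `⟦M⟧v`. -/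
noncomputable def semV : Term → PDist := semOf SmallV

/-- Call-by-name small-step semantics `⟦M⟧n`. -/
noncomputable def semN : Term → PDist := semOf SmallN

/-- One-step unfolding of the divergence inference system: a value diverges
with probability `0`; if `M ↦ N₁,…,Nₙ` and `Nᵢ` diverges with probability
`pᵢ`, then `M` diverges with probability `Σᵢ (1/n)pᵢ`. -/
def DivStep (Red : Term → List Term → Prop) (R : Term → ℝ≥0∞ → Prop)
    (M : Term) (p : ℝ≥0∞) : Prop :=
  (M.IsValue ∧ p = 0) ∨
    ∃ (Ns : List Term) (ps : Fin Ns.length → ℝ≥0∞),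
      Red M Ns ∧ (∀ i, R (Ns.get i) (ps i)) ∧ p = (∑ i, ps i) / (Ns.length : ℝ≥0∞)

/-- The coinductively-defined divergence relation `⇓div`: the union of all
consistent relations between terms and probabilities in `[0,1]`. -/
def Diverges (Red : Term → List Term → Prop) (M : Term) (p : ℝ≥0∞) : Prop :=
  ∃ R : Term → ℝ≥0∞ → Prop,
    (∀ N q, R N q → q ≤ 1 ∧ DivStep Red R N q) ∧ R M p

/-- Call-by-value divergence `⇓div`. -/
def DivV : Term → ℝ≥0∞ → Prop := Diverges RedV

/-- Call-by-name divergence `⇓div,n`. -/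
def DivN : Term → ℝ≥0∞ → Prop := Diverges RedN

/-- One-step unfolding of the call-by-value big-step inference system. -/
def BigVStep (R : Term → PDist → Prop) (M : Term) (D : PDist) : Prop :=
  (M.IsValue ∧ D = dirac M) ∨
  (∃ (N L : Term) (E F : PDist) (G : Term → Term → PDist),
      M = .app N L ∧ R N E ∧ R L F ∧
      (∀ P V, E (.lam P) ≠ 0 → V.IsValue → F V ≠ 0 → R (P.subst 0 V) (G P V)) ∧
      D = fun W => ∑' (P : Term), ∑' (V : Term), E (.lam P) * F V * G P V W) ∨
  (∃ (N L : Term) (E F : PDist),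
      M = .choice N L ∧ R N E ∧ R L F ∧
      D = fun W => (E W * dsum F + F W * dsum E) / 2)

/-- The coinductive call-by-value big-step relation `⇓v`: the union of all
consistent relations between terms and distributions. -/
def BigV (M : Term) (D : PDist) : Prop :=
  ∃ R : Term → PDist → Prop,
    (∀ N E, R N E → IsDist E ∧ BigVStep R N E) ∧ R M D

/-- One-step unfolding of the call-by-name big-step inference system. -/
def BigNStep (R : Term → PDist → Prop) (M : Term) (D : PDist) : Prop :=
  (M.IsValue ∧ D = dirac M) ∨
  (∃ (N L : Term) (E : PDist) (F : Term → PDist),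
      M = .app N L ∧ R N E ∧
      (∀ P, E (.lam P) ≠ 0 → R (P.subst 0 L) (F P)) ∧
      D = fun W => ∑' (P : Term), E (.lam P) * F P W) ∨
  (∃ (N L : Term) (E F : PDist),
      M = .choice N L ∧ R N E ∧ R L F ∧ D = fun W => (E W + F W) / 2)

/-- The coinductive call-by-name big-step relation `⇓n`. -/
def BigN (M : Term) (D : PDist) : Prop :=
  ∃ R : Term → PDist → Prop,
    (∀ N E, R N E → IsDist E ∧ BigNStep R N E) ∧ R M D

/-- Big-step semantics `⟪M⟫`: the pointwise infimum of all distributions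
derivable for `M` in a big-step system. -/
noncomputable def bigSemOf (B : Term → PDist → Prop) (M : Term) : PDist :=
  fun W => ⨅ (D : PDist) (_ : B M D), D W

open Term in
/-- The call-by-value CPS translation `⟨·⟩` of Plotkin, extended to binary
choice (de Bruijn version; the continuation variables `ε, α, β, γ` of `Λ⊕⁺`
are rendered as the extra binders introduced by the translation). -/
def cps : Term → Term
  | .var n => .lam (.app (.var 0) (.var (n + 1)))
  | .lam M => .lam (.app (.var 0) (.lam (shift 1 1 (cps M))))
  | .app M N =>
      .lam (.app (shift 1 0 (cps M))
        (.lam (.app (shift 2 0 (cps N))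
          (.lam (.app (.app (.var 1) (.var 0)) (.var 2))))))
  | .choice M N =>
      .lam (.app (shift 1 0 (cps M))
        (.lam (.app (shift 2 0 (cps N))
          (.lam (.app
            (.choice (.lam (.app (.var 0) (.var 2))) (.lam (.app (.var 0) (.var 1))))
            (.var 2))))))

/-- The map `Ψ` on values: `Ψ(x) = x`, `Ψ(λx.M) = λx.⟨M⟩` (extended
structurally to all terms). -/
def psi : Term → Term
  | .var n => .var n
  | .lam M => .lam (cps M)
  | .app M N => .app (psi M) (psi N)
  | .choice M N => .choice (psi M) (psi N)

/-- The pushforward of a distribution along `Ψ`: `Ψ(𝒟)(W) = Σ_{V : Ψ(V)=W} 𝒟(V)`. -/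
noncomputable def pushPsi (D : PDist) : PDist :=
  fun W => ∑' V : Term, if psi V = W then D V else 0

open Term in
/-- The call-by-name CPS translation `⌈·⌉` (de Bruijn version). -/
def cpn : Term → Term
  | .var n => .var n
  | .lam M => .lam (.app (.var 0) (.lam (shift 1 1 (cpn M))))
  | .app M N =>
      .lam (.app (shift 1 0 (cpn M))
        (.lam (.app (.app (.var 0) (shift 2 0 (cpn N))) (.var 1))))
  | .choice M N =>
      .lam (.app
        (.choice (.lam (.app (shift 2 0 (cpn M)) (.var 0)))
                 (.lam (.app (shift 2 0 (cpn N)) (.var 0))))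
        (.var 0))

/-- The map `Φ` on values: `Φ(x) = x(λy.y)`, `Φ(λx.M) = λx.⌈M⌉` (extended
structurally to all terms). -/
def phi : Term → Term
  | .var n => .app (.var n) (.lam (.var 0))
  | .lam M => .lam (cpn M)
  | .app M N => .app (phi M) (phi N)
  | .choice M N => .choice (phi M) (phi N)

/-- The pushforward of a distribution along `Φ`. -/
noncomputable def pushPhi (D : PDist) : PDist :=
  fun W => ∑' V : Term, if phi V = W then D V else 0

open Term in
/-- Plotkin's infix operator `M : K` for the call-by-value CPS translation,
extended to binary choice. -/
def colonV : Term → Term → Term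
  | .var n, K => .app K (psi (.var n))
  | .lam M, K => .app K (psi (.lam M))
  | .app L P, K =>
      if L.isVal then
        if P.isVal then .app (.app (psi L) (psi P)) K
        else colonV P (.lam (.app (.app (shift 1 0 (psi L)) (.var 0)) (shift 1 0 K)))
      else
        colonV L (.lam (.app (shift 1 0 (cps P))
          (.lam (.app (.app (.var 1) (.var 0)) (shift 2 0 K)))))
  | .choice L P, K =>
      if L.isVal then
        if P.isVal then
          .app (.choice (.lam (.app (.var 0) (shift 1 0 (psi L))))
                        (.lam (.app (.var 0) (shift 1 0 (psi P))))) K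
        else
          colonV P (.lam (.app
            (.choice (.lam (.app (.var 0) (shift 2 0 (psi L))))
                     (.lam (.app (.var 0) (.var 1))))
            (shift 1 0 K)))
      else
        colonV L (.lam (.app (shift 1 0 (cps P))
          (.lam (.app
            (.choice (.lam (.app (.var 0) (.var 2))) (.lam (.app (.var 0) (.var 1))))
            (shift 2 0 K)))))

/-- A deterministic reduction step: a reduction whose right-hand side is a
one-element sequence. -/
def DetStepN (M N : Term) : Prop := RedN M [N]

/-- Scott numerals: `⌜0⌝ = λxy.x`, `⌜n+1⌝ = λxy.y⌜n⌝`. -/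
def scott : ℕ → Term
  | 0 => .lam (.lam (.var 1))
  | n + 1 => .lam (.lam (.app (.var 0) (scott n)))

/-- The binary string (of length `n`) made of the first `n` digits of the
binary expansion of `x ∈ [0,1]`. -/
noncomputable def binApprox (x : ℝ≥0∞) (n : ℕ) : List Bool :=
  (List.range n).map (fun i => decide (⌊x.toReal * 2 ^ (i + 1)⌋ % 2 = 1))

/-- A distribution `D : ℕ → [0,1]` is computable when its approximating
function `(a, n) ↦` first `n` binary digits of `D a` is computable. -/
def ComputableDist (D : ℕ → ℝ≥0∞) : Prop :=
  Computable fun p : ℕ × ℕ => binApprox (D p.1) p.2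

/-!
Plotkin's colon translation `M : K` is what is left of `⌈M⌉ K` once all the administrative redexes
at its head have been contracted. A call-by-name step of `M` into `N₁, …, Nₙ` is one call-by-value
step of `M : K` into `n` terms, followed by administrative steps that lead to `N₁ : K, …, Nₙ : K`;
and `M : K` is stuck when `M` is. As a least fixed point of the one-step evaluation operator, the
semantics is blind to administrative steps, so fixed point induction on either side transfers one
semantics to the other.

The only obstacle is that `Φ` maps a variable to a stuck term: the two sides differ exactly by the
probability that `M` evaluates to a variable.
-/

open Relation

namespace Term

theorem shift_zero (c : ℕ) (M : Term) : shift 0 c M = M := by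
  induction M generalizing c <;> simp_all [shift]

theorem shift_shift_of_le {c i j : ℕ} (hci : c ≤ i) (hij : i ≤ c + j) (k : ℕ) (M : Term) :
    shift k i (shift j c M) = shift (j + k) c M := by
  induction M generalizing c i with
  | var n => simp only [shift]; split_ifs <;> simp only [shift] <;> split_ifs <;> grind
  | lam M ih => simp only [shift, ih (Nat.succ_le_succ hci) (by omega)]
  | app M N ihM ihN => simp only [shift, ihM hci hij, ihN hci hij]
  | choice M N ihM ihN => simp only [shift, ihM hci hij, ihN hci hij]

theorem shift_shift_comm {i c : ℕ} (hic : i ≤ c) (d e : ℕ) (M : Term) :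
    shift d (c + e) (shift e i M) = shift e i (shift d c M) := by
  induction M generalizing i c with
  | var n => simp only [shift]; split_ifs <;> simp only [shift] <;> split_ifs <;> grind
  | lam M ih => simp only [shift, Nat.add_right_comm c e 1, ih (Nat.add_le_add_right hic 1)]
  | app M N ihM ihN => simp only [shift, ihM hic, ihN hic]
  | choice M N ihM ihN => simp only [shift, ihM hic, ihN hic]

theorem subst_shift_comm {i j : ℕ} (hij : i ≤ j) (k : ℕ) (M N : Term) :
    subst (shift k i M) (j + k) N = shift k i (subst M j N) := by
  induction M generalizing i j with
  | var n =>
    have hN : shift k i (shift j 0 N) = shift (j + k) 0 N :=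
      shift_shift_of_le (Nat.zero_le i) (by omega) k N
    simp only [shift, subst]
    split_ifs <;> simp only [shift, subst] <;> split_ifs <;> grind
  | lam M ih => simp only [shift, subst, Nat.add_right_comm j k 1, ih (Nat.add_le_add_right hij 1)]
  | app M L ihM ihL => simp only [shift, subst, ihM hij, ihL hij]
  | choice M L ihM ihL => simp only [shift, subst, ihM hij, ihL hij]

theorem subst_shift_succ {c d j : ℕ} (hcj : c ≤ j) (hjd : j ≤ c + d) (M N : Term) :
    subst (shift (d + 1) c M) j N = shift d c M := by
  induction M generalizing c j with
  | var n => simp only [shift]; split_ifs <;> simp only [subst] <;> split_ifs <;> grind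
  | lam M ih => simp only [shift, subst, ih (Nat.succ_le_succ hcj) (by omega)]
  | app M L ihM ihL => simp only [shift, subst, ihM hcj hjd, ihL hcj hjd]
  | choice M L ihM ihL => simp only [shift, subst, ihM hcj hjd, ihL hcj hjd]

theorem subst_shift_one (j : ℕ) (M N : Term) : subst (shift 1 j M) j N = M := by
  rw [subst_shift_succ le_rfl le_rfl, shift_zero]

theorem shift_injective (d c : ℕ) : Function.Injective (shift d c) := by
  intro M N h
  induction d with
  | zero => simpa only [shift_zero] using h
  | succ d ih =>
    apply ih
    have hsubst := congrArg (subst · c (var 0)) h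
    simpa only [subst_shift_succ le_rfl (Nat.le_add_right c d)] using hsubst

theorem shift_one_ne_var_zero (M : Term) : shift 1 0 M ≠ var 0 := by
  cases M <;> simp [shift]

theorem closedUnder_shift {M : Term} {n : ℕ} (h : closedUnder M n) (d c : ℕ) :
    closedUnder (shift d c M) (n + d) := by
  induction M generalizing n c with
  | var m => simp only [shift]; split_ifs <;> simp only [closedUnder] at h ⊢ <;> omega
  | lam M ih => simpa only [shift, closedUnder, Nat.add_right_comm] using ih h (c + 1)
  | app M N ihM ihN => exact ⟨ihM h.1 c, ihN h.2 c⟩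
  | choice M N ihM ihN => exact ⟨ihM h.1 c, ihN h.2 c⟩

theorem closedUnder_subst {M N : Term} {n j : ℕ} (hM : closedUnder M (n + j + 1))
    (hN : closedUnder N n) : closedUnder (subst M j N) (n + j) := by
  induction M generalizing j with
  | var m =>
    have := closedUnder_shift hN j 0
    simp only [subst]
    split_ifs <;> simp only [closedUnder] at hM ⊢ <;> first | assumption | omega
  | lam M ih => exact ih (j := j + 1) hM
  | app M L ihM ihL => exact ⟨ihM hM.1, ihL hM.2⟩
  | choice M L ihM ihL => exact ⟨ihM hM.1, ihL hM.2⟩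

end Term

open Term

theorem RedN.closed {M : Term} {Ns : List Term} (h : RedN M Ns) (hM : M.Closed) :
    ∀ N ∈ Ns, N.Closed := by
  induction h with
  | beta => exact List.forall_mem_singleton.2 (closedUnder_subst (j := 0) hM.1 hM.2)
  | choice => exact List.forall_mem_cons.2 ⟨hM.1, List.forall_mem_singleton.2 hM.2⟩
  | appL _ ih => simpa using fun L hL ↦ ⟨ih hM.1 L hL, hM.2⟩

theorem RedV.not_isValue {M : Term} {Ns : List Term} (h : RedV M Ns) : ¬ M.IsValue := by
  rintro ⟨⟩ <;> cases h

theorem RedV.unique {M : Term} {Ns Ns' : List Term} (h : RedV M Ns) (h' : RedV M Ns') :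
    Ns = Ns' := by
  induction h generalizing Ns' <;> cases h' <;>
    grind [RedV.not_isValue, IsValue.lam]

section Semantics

theorem sum_iSup_eq_iSup_pi_sum {ι : Type*} [Fintype ι] {κ : ι → Type*}
    [∀ i, Nonempty (κ i)] (f : ∀ i, κ i → ℝ≥0∞) :
    ∑ i, ⨆ k, f i k = ⨆ g : ∀ i, κ i, ∑ i, f i (g i) := by
  have hsup (i : ι) : ⨆ k, f i k = ⨆ g : ∀ i, κ i, f i (g i) :=
    ((Function.surjective_eval i).iSup_comp (f i)).symm
  simp only [hsup]
  refine ENNReal.finsetSum_iSup fun g g' ↦ ?_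
  have hmax (i : ι) : ∃ k, f i (g i) ≤ f i k ∧ f i (g' i) ≤ f i k :=
    (le_total (f i (g i)) (f i (g' i))).elim (fun h ↦ ⟨g' i, h, le_rfl⟩) (fun h ↦ ⟨g i, le_rfl, h⟩)
  choose k hk using hmax
  exact ⟨k, hk⟩

/-- The expected value of `f` at a uniformly chosen entry of the list `Ns`, that is, the weight
`Σᵢ (1/n) f(Nᵢ)` of the step rule. -/
noncomputable def mean (f : Term → ℝ≥0∞) (Ns : List Term) : ℝ≥0∞ :=
  (Ns.map f).sum / Ns.length

theorem mean_singleton (f : Term → ℝ≥0∞) (N : Term) : mean f [N] = f N := by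
  simp [mean]

theorem mean_eq_sum_fin (f : Term → ℝ≥0∞) (Ns : List Term) :
    mean f Ns = (∑ i, f (Ns.get i)) / Ns.length := by
  rw [mean, ← List.sum_ofFn]
  congr 2
  exact (List.ofFn_getElem_eq_map Ns f).symm

theorem mean_le_mean {f g : Term → ℝ≥0∞} {Ms Ns : List Term}
    (h : List.Forall₂ (fun M N ↦ f M ≤ g N) Ms Ns) : mean f Ms ≤ mean g Ns := by
  rw [mean, mean, h.length_eq]
  gcongr
  exact List.Forall₂.sum_le_sum (List.forall₂_map_left_iff.2 (List.forall₂_map_right_iff.2 h))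

theorem mean_mono : Monotone mean := fun _ _ hfg _ ↦
  mean_le_mean (List.forall₂_same.2 fun N _ ↦ hfg N)

theorem mean_eq_zero {f : Term → ℝ≥0∞} {Ns : List Term} (h : ∀ N ∈ Ns, f N = 0) :
    mean f Ns = 0 := by
  simp [mean, List.map_congr_left h]

/-- One step of evaluation, as an operator on the functions giving, for each term, its probability
of evaluating to `W`. The two rules are joined by a supremum, so that the definition makes sense
for relations that are not deterministic. -/
noncomputable def evalStep (Red : Term → List Term → Prop) (W : Term) :
    (Term → ℝ≥0∞) →o (Term → ℝ≥0∞) where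
  toFun F M := (⨆ _ : M.IsValue, dirac M W) ⊔ ⨆ (Ns) (_ : Red M Ns), mean F Ns
  monotone' _ _ hFG _ := sup_le_sup le_rfl (iSup₂_mono fun _ _ ↦ mean_mono hFG _)

variable {Red : Term → List Term → Prop} {W : Term} {F : Term → ℝ≥0∞}

theorem dirac_le_evalStep {V : Term} (hV : V.IsValue) : dirac V W ≤ evalStep Red W F V :=
  le_sup_of_le_left (le_iSup_of_le hV le_rfl)

theorem mean_le_evalStep {M : Term} {Ns : List Term} (h : Red M Ns) :
    mean F Ns ≤ evalStep Red W F M :=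
  le_sup_of_le_right (le_iSup₂_of_le Ns h le_rfl)

theorem evalStep_le_iff {M : Term} {a : ℝ≥0∞} :
    evalStep Red W F M ≤ a ↔
      (M.IsValue → dirac M W ≤ a) ∧ ∀ Ns, Red M Ns → mean F Ns ≤ a :=
  sup_le_iff.trans (and_congr iSup_le_iff iSup₂_le_iff)

theorem mean_semOf_le {M : Term} {Ns : List Term} (h : Red M Ns) :
    mean (semOf (Conv Red) · W) Ns ≤ semOf (Conv Red) M W := by
  have (i : Fin Ns.length) : Nonempty {D // Conv Red (Ns.get i) D} := ⟨dzero, .bot _⟩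
  calc mean (semOf (Conv Red) · W) Ns
      = (∑ i, ⨆ D : {D // Conv Red (Ns.get i) D}, D.1 W) / Ns.length := by
        simp only [mean_eq_sum_fin, semOf, iSup_subtype']
    _ = ⨆ Ds : ∀ i, {D // Conv Red (Ns.get i) D}, (∑ i, (Ds i).1 W) / Ns.length := by
        rw [sum_iSup_eq_iSup_pi_sum, ENNReal.iSup_div]
    _ ≤ semOf (Conv Red) M W :=
        iSup_le fun Ds ↦ le_iSup₂_of_le _ (.step (fun i ↦ (Ds i).1) h fun i ↦ (Ds i).2) le_rfl

theorem Conv.le_lfp_evalStep {M : Term} {D : PDist} (h : Conv Red M D) :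
    D W ≤ (evalStep Red W).lfp M := by
  induction h with
  | bot M => exact zero_le
  | val hV =>
    rw [← (evalStep Red W).map_lfp]
    exact dirac_le_evalStep hV
  | @step M Ns Ds hred _ ih =>
    calc (∑ i, Ds i W) / (Ns.length : ℝ≥0∞)
        ≤ (∑ i, (evalStep Red W).lfp (Ns.get i)) / Ns.length := by gcongr with i; exact ih i
      _ = mean (evalStep Red W).lfp Ns := (mean_eq_sum_fin _ Ns).symm
      _ ≤ evalStep Red W (evalStep Red W).lfp M := mean_le_evalStep hred
      _ = (evalStep Red W).lfp M := by rw [OrderHom.map_lfp]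

theorem semOf_conv_eq_lfp (Red : Term → List Term → Prop) (W : Term) :
    (semOf (Conv Red) · W) = (evalStep Red W).lfp := by
  apply le_antisymm
  · exact fun M ↦ iSup₂_le fun D hD ↦ hD.le_lfp_evalStep
  · exact (evalStep Red W).lfp_le fun M ↦ evalStep_le_iff.2
      ⟨fun hM ↦ le_iSup₂_of_le (dirac M) (.val hM) le_rfl, fun Ns h ↦ mean_semOf_le h⟩

theorem evalStep_semOf (Red : Term → List Term → Prop) (W : Term) :
    evalStep Red W (semOf (Conv Red) · W) = (semOf (Conv Red) · W) := by
  rw [semOf_conv_eq_lfp, OrderHom.map_lfp]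

theorem semOf_le_of_evalStep_le (h : evalStep Red W F ≤ F) (M : Term) :
    semOf (Conv Red) M W ≤ F M :=
  (congrFun (semOf_conv_eq_lfp Red W) M).trans_le ((evalStep Red W).lfp_le h M)

theorem dirac_le_semOf {V : Term} (hV : V.IsValue) : dirac V W ≤ semOf (Conv Red) V W :=
  le_iSup₂_of_le (dirac V) (.val hV) le_rfl

theorem semOf_eq_zero_of_invariant {p : Term → Prop}
    (hp : ∀ {N Ns}, Red N Ns → p N → ∀ L ∈ Ns, p L) (hW : W.IsValue → ¬ p W) {M : Term}
    (hM : p M) : semOf (Conv Red) M W = 0 := by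
  classical
  suffices h : semOf (Conv Red) M W ≤ if p M then 0 else ⊤ by simpa [hM] using h
  refine semOf_le_of_evalStep_le (F := fun N ↦ if p N then 0 else ⊤) (fun N ↦ ?_) M
  by_cases hN : p N
  · simp only [if_pos hN]
    refine evalStep_le_iff.2 ⟨fun hval ↦ ?_, fun Ns hred ↦ ?_⟩
    · have hne : W ≠ N := by rintro rfl; exact hW hval hN
      exact (if_neg hne).le
    · exact (mean_eq_zero fun L hL ↦ if_pos (hp hred hN L hL)).le
  · simp only [if_neg hN, le_top]

theorem semOf_eq_zero_of_not_isValue (hW : ¬ W.IsValue) (M : Term) :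
    semOf (Conv Red) M W = 0 :=
  semOf_eq_zero_of_invariant (p := fun _ ↦ True) (fun _ _ _ _ ↦ trivial) (absurd · hW) trivial

end Semantics

theorem semN_var_eq_zero {M : Term} (hM : M.Closed) (n : ℕ) : semN M (var n) = 0 :=
  semOf_eq_zero_of_invariant RedN.closed (fun _ ↦ Nat.not_lt_zero n) hM

/-- Deterministic call-by-value steps, the counterpart of `DetStepN`. -/
def DetStepV (M N : Term) : Prop := RedV M [N]

section CallByValue

variable {W : Term} {F : Term → ℝ≥0∞} {T T' : Term} {Ts : List Term}

theorem DetStepV.beta {M V : Term} (hV : V.IsValue) (h : M.subst 0 V = T) :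
    DetStepV (.app (.lam M) V) T :=
  h ▸ RedV.beta hV

theorem evalStep_of_redV (h : RedV T Ts) : evalStep RedV W F T = mean F Ts := by
  refine le_antisymm (evalStep_le_iff.2 ⟨fun hT ↦ ?_, fun Ts' h' ↦ ?_⟩) (mean_le_evalStep h)
  · exact absurd hT h.not_isValue
  · rw [h.unique h']

theorem le_of_reflTransGen_detStepV (hF : F ≤ evalStep RedV W F)
    (h : ReflTransGen DetStepV T T') : F T ≤ F T' := by
  induction h with
  | refl => exact le_rfl
  | @tail T₁ T₂ _ hstep ih =>
    refine ih.trans ((hF T₁).trans_eq ?_)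
    rw [evalStep_of_redV hstep, mean_singleton]

theorem semV_eq_of_reflTransGen_detStepV (h : ReflTransGen DetStepV T T') (W : Term) :
    semV T W = semV T' W := by
  induction h with
  | refl => rfl
  | @tail T₁ T₂ _ hstep ih =>
    have hfix : evalStep RedV W (semV · W) T₁ = semV T₁ W :=
      congrFun (evalStep_semOf RedV W) T₁
    rw [ih, ← hfix, evalStep_of_redV hstep, mean_singleton]

end CallByValue

theorem cpn_shift (d c : ℕ) (M : Term) : cpn (shift d c M) = shift d c (cpn M) := by
  induction M generalizing c with
  | var n => simp only [shift]; split_ifs <;> simp [cpn, shift, *]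
  | lam M ih => simp [cpn, shift, ih, shift_shift_comm]
  | app M N ihM ihN => simp [cpn, shift, ihM, ihN, ← shift_shift_comm]
  | choice M N ihM ihN => simp [cpn, shift, ihM, ihN, ← shift_shift_comm]

theorem cpn_subst (M : Term) (j : ℕ) (N : Term) :
    cpn (M.subst j N) = (cpn M).subst j (cpn N) := by
  induction M generalizing j with
  | var n => simp only [subst, cpn]; split_ifs <;> simp only [cpn, cpn_shift]
  | lam M ih => simp [cpn, subst, ih, ← subst_shift_comm]
  | app M L ihM ihL => simp [cpn, subst, ihM, ihL, ← subst_shift_comm]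
  | choice M L ihM ihL => simp [cpn, subst, ihM, ihL, ← subst_shift_comm]

theorem isValue_cpn (M : Term) : (cpn M).IsValue := by
  cases M <;> constructor

theorem cpn_injective : Function.Injective cpn := by
  intro M N h
  have hshift (d c : ℕ) {M N : Term} : shift d c M = shift d c N → M = N :=
    fun hMN ↦ shift_injective d c hMN
  induction M generalizing N <;> cases N <;> grind [cpn, shift_one_ne_var_zero]

theorem phi_ne_var (M : Term) (n : ℕ) : phi M ≠ var n := by
  cases M <;> simp [phi]

theorem phi_injective : Function.Injective phi := by
  intro M N h
  induction M generalizing N <;> cases N <;>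
    grind [phi, cpn_injective.eq_iff, phi_ne_var]

theorem pushPhi_phi (D : PDist) (V : Term) : pushPhi D (phi V) = D V := by
  simp [pushPhi, phi_injective.eq_iff]

theorem pushPhi_eq_zero {W : Term} (hW : W ∉ Set.range phi) (D : PDist) : pushPhi D W = 0 :=
  ENNReal.tsum_eq_zero.2 fun V ↦ if_neg fun hV ↦ hW ⟨V, hV⟩

theorem dirac_phi_le_pushPhi_semN {V : Term} (hV : V.IsValue) (W : Term) :
    dirac (phi V) W ≤ pushPhi (semN V) W := by
  by_cases hW : W = phi V
  · subst hW
    calc dirac (phi V) (phi V) = dirac V V := by simp only [dirac, if_pos]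
      _ ≤ semN V V := dirac_le_semOf hV
      _ = pushPhi (semN V) (phi V) := (pushPhi_phi _ V).symm
  · exact (if_neg hW).trans_le zero_le

theorem mean_pushPhi_semN_le {M : Term} {Ns : List Term} (h : RedN M Ns) (W : Term) :
    mean (fun N ↦ pushPhi (semN N) W) Ns ≤ pushPhi (semN M) W := by
  by_cases hW : W ∈ Set.range phi
  · obtain ⟨V, rfl⟩ := hW
    simpa only [pushPhi_phi] using! mean_semOf_le (W := V) h
  · exact (mean_eq_zero fun _ _ ↦ pushPhi_eq_zero hW _).trans_le zero_le

/-- The continuation `λα. α ⌈N⌉ K`, which applies the value of a function to `N` and passes the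
result on to `K`. -/
def argCont (N K : Term) : Term :=
  .lam (.app (.app (.var 0) (shift 1 0 (cpn N))) (shift 1 0 K))

/-- Plotkin's colon translation `M : K` for call-by-name, the counterpart of `colonV`: the reduct of
`⌈M⌉ K` after the administrative steps. -/
def colonN : Term → Term → Term
  | .var n, K => .app (.var n) K
  | .lam M, K => .app K (.lam (cpn M))
  | .app M N, K => colonN M (argCont N K)
  | .choice M N, K =>
      .app (.choice (.lam (.app (shift 1 0 (cpn M)) (.var 0)))
                    (.lam (.app (shift 1 0 (cpn N)) (.var 0)))) K

theorem isValue_argCont (N K : Term) : (argCont N K).IsValue :=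
  .lam _

theorem not_isValue_colonN (M K : Term) : ¬ (colonN M K).IsValue := by
  induction M generalizing K with
  | app _ _ ihM _ => exact ihM _
  | _ => nofun

theorem detStepV_argCont {V : Term} (hV : V.IsValue) (N K : Term) :
    DetStepV (.app (argCont N K) V) (.app (.app V (cpn N)) K) :=
  .beta hV <| by simp [subst, subst_shift_one, shift_zero]

theorem cpn_app_detSteps_colonN (M : Term) {K : Term} (hK : K.IsValue) :
    ReflTransGen DetStepV (.app (cpn M) K) (colonN M K) := by
  induction M generalizing K with
  | var n => exact .refl
  | lam M => exact .single (.beta hK (by simp [subst, subst_shift_one, shift_zero, colonN]))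
  | app M N ihM _ =>
    refine .head (.beta hK ?_) (ihM (isValue_argCont N K))
    simp [subst, subst_shift_succ, shift_zero, argCont]
  | choice M N => exact .single (.beta hK (by simp [subst, subst_shift_succ, shift_zero, colonN]))

theorem RedN.exists_redV_colonN {M K : Term} {Ns : List Term} (h : RedN M Ns)
    (hK : K.IsValue) :
    ∃ Ts, RedV (colonN M K) Ts ∧
      List.Forall₂ (fun T N ↦ ReflTransGen DetStepV T (colonN N K)) Ts Ns := by
  induction h generalizing K with
  | @beta M N =>
    refine ⟨_, detStepV_argCont (.lam (cpn M)) N K, .cons ?_ .nil⟩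
    have hbeta : DetStepV (.app (.lam (cpn M)) (cpn N)) (cpn (M.subst 0 N)) :=
      .beta (isValue_cpn N) (cpn_subst M 0 N).symm
    exact .head hbeta.appL (cpn_app_detSteps_colonN _ hK)
  | @choice M N =>
    have happly (L : Term) : DetStepV (.app (.lam (.app (shift 1 0 (cpn L)) (.var 0))) K)
        (.app (cpn L) K) :=
      .beta hK (by simp [subst, subst_shift_one, shift_zero])
    exact ⟨_, (RedV.choice (.lam _) (.lam _)).appL,
      .cons (.head (happly M) (cpn_app_detSteps_colonN M hK))
        (.cons (.head (happly N) (cpn_app_detSteps_colonN N hK)) .nil)⟩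
  | appL _ ih =>
    obtain ⟨Ts, hTs, hsteps⟩ := ih (isValue_argCont _ K)
    exact ⟨Ts, hTs, List.forall₂_map_right_iff.2 hsteps⟩

theorem not_redV_colonN {M : Term} (hlam : ∀ P, M ≠ .lam P) (hstuck : ∀ Ns, ¬ RedN M Ns)
    {K : Term} (hK : K.IsValue) (Ts : List Term) : ¬ RedV (colonN M K) Ts := by
  induction M generalizing K with
  | var n =>
    rintro (_ | _ | h | ⟨_, h⟩)
    · cases h
    · exact h.not_isValue hK
  | lam P => exact absurd rfl (hlam P)
  | app M N ihM _ =>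
    refine ihM ?_ (fun Ns h ↦ hstuck _ h.appL) (isValue_argCont N K)
    rintro P rfl
    exact hstuck _ .beta
  | choice M N => exact absurd .choice (hstuck [M, N])

theorem evalStep_colonN_id_le {W : Term} {F : Term → ℝ≥0∞} (hF : F ≤ evalStep RedV W F)
    (ih : ∀ N, F (colonN N (.lam (.var 0))) ≤ pushPhi (semN N) W) (M : Term) :
    evalStep RedV W F (colonN M (.lam (.var 0))) ≤ pushPhi (semN M) W := by
  have hid : IsValue (.lam (.var 0)) := .lam _
  rcases em (∃ P, M = .lam P) with ⟨P, rfl⟩ | hlam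
  · have hbeta : RedV (colonN (.lam P) (.lam (.var 0))) [.lam (cpn P)] :=
      DetStepV.beta (.lam _) (shift_zero 0 _)
    calc evalStep RedV W F (colonN (.lam P) (.lam (.var 0)))
        = F (.lam (cpn P)) := by rw [evalStep_of_redV hbeta, mean_singleton]
      _ ≤ dirac (phi (.lam P)) W := (hF _).trans <| evalStep_le_iff.2
          ⟨fun _ ↦ le_rfl, fun _ h ↦ absurd (.lam _) h.not_isValue⟩
      _ ≤ pushPhi (semN (.lam P)) W := dirac_phi_le_pushPhi_semN (.lam P) W
  rcases em (∃ Ns, RedN M Ns) with ⟨Ns, hNs⟩ | hred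
  · obtain ⟨Ts, hTs, hsteps⟩ := hNs.exists_redV_colonN hid
    calc evalStep RedV W F (colonN M (.lam (.var 0)))
        = mean F Ts := evalStep_of_redV hTs
      _ ≤ mean (fun N ↦ pushPhi (semN N) W) Ns := mean_le_mean <| hsteps.imp fun T N h ↦
          (le_of_reflTransGen_detStepV hF h).trans (ih N)
      _ ≤ pushPhi (semN M) W := mean_pushPhi_semN_le hNs W
  · push Not at hlam hred
    exact evalStep_le_iff.2 ⟨fun h ↦ absurd h (not_isValue_colonN M _),
      fun Ts h ↦ absurd h (not_redV_colonN hlam hred hid Ts)⟩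

theorem semV_colonN_id_le_pushPhi_semN (M W : Term) :
    semV (colonN M (.lam (.var 0))) W ≤ pushPhi (semN M) W := by
  let G : Term → ℝ≥0∞ := fun N ↦ pushPhi (semN N) W
  -- Fixed point induction on the second conjunct alone would fail: the first one is what lets
  -- administrative steps be skipped at every stage of the iteration.
  suffices h : (evalStep RedV W).lfp ≤ evalStep RedV W (evalStep RedV W).lfp ∧
      ∀ N, (evalStep RedV W).lfp (colonN N (.lam (.var 0))) ≤ G N from
    (congrFun (semOf_conv_eq_lfp RedV W) _).trans_le (h.2 M)
  refine OrderHom.lfp_induction (p := fun F ↦ F ≤ evalStep RedV W F ∧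
    ∀ N, F (colonN N (.lam (.var 0))) ≤ G N) _ ?_ ?_
  · rintro F ⟨hF, ih⟩ -
    exact ⟨(evalStep RedV W).mono hF, evalStep_colonN_id_le hF ih⟩
  · intro S hS
    refine ⟨sSup_le fun F hF ↦ (hS F hF).1.trans ((evalStep RedV W).mono (le_sSup hF)),
      fun N ↦ ?_⟩
    rw [sSup_apply]
    exact iSup_le fun F ↦ (hS F F.2).2 N

theorem semN_lam_le_semV_colonN_id (M P : Term) :
    semN M (.lam P) ≤ semV (colonN M (.lam (.var 0))) (phi (.lam P)) := by
  have hid : IsValue (.lam (.var 0)) := .lam _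
  refine semOf_le_of_evalStep_le
    (F := fun N ↦ semV (colonN N (.lam (.var 0))) (phi (.lam P))) (fun N ↦ ?_) M
  refine evalStep_le_iff.2 ⟨fun hN ↦ ?_, fun Ns hNs ↦ ?_⟩
  · by_cases hPN : Term.lam P = N
    · subst hPN
      have hbeta : DetStepV (colonN (.lam P) (.lam (.var 0))) (phi (.lam P)) :=
        .beta (.lam _) (shift_zero 0 _)
      calc dirac (.lam P) (.lam P)
          = dirac (phi (.lam P)) (phi (.lam P)) := by simp only [dirac, if_pos]
        _ ≤ semV (phi (.lam P)) (phi (.lam P)) := dirac_le_semOf (.lam _)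
        _ = semV (colonN (.lam P) (.lam (.var 0))) (phi (.lam P)) :=
            (semV_eq_of_reflTransGen_detStepV (.single hbeta) _).symm
    · simp [dirac, hPN]
  · obtain ⟨Ts, hTs, hsteps⟩ := hNs.exists_redV_colonN hid
    refine le_trans (mean_le_mean ?_) (mean_semOf_le hTs)
    exact hsteps.flip.imp fun N T h ↦ (semV_eq_of_reflTransGen_detStepV h _).ge

theorem cps_simulation_n_by_v_general (M : Term) (hM : ∀ n, semN M (.var n) = 0) :
    pushPhi (semN M) = semV (.app (cpn M) (.lam (.var 0))) := by
  have hcolon (W : Term) :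
      semV (.app (cpn M) (.lam (.var 0))) W = semV (colonN M (.lam (.var 0))) W :=
    semV_eq_of_reflTransGen_detStepV (cpn_app_detSteps_colonN M (.lam _)) W
  funext W
  rw [hcolon]
  refine le_antisymm ?_ (semV_colonN_id_le_pushPhi_semN M W)
  by_cases hW : W ∈ Set.range phi
  · obtain ⟨V, rfl⟩ := hW
    rw [pushPhi_phi]
    cases V with
    | var n => exact (hM n).trans_le zero_le
    | lam P => exact semN_lam_le_semV_colonN_id M P
    | _ => exact (semOf_eq_zero_of_not_isValue (by nofun) M).trans_le zero_le
  · exact (pushPhi_eq_zero hW _).trans_le zero_le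

/-- call-by-name is simulated by call-by-value through the CPS
translation: `Φ(⟦M⟧n) = ⟦⌈M⌉(λx.x)⟧v`. -/
theorem cps_simulation_n_by_v (M : Term) (hM : M.Closed) :
    pushPhi (semN M) = semV (.app (cpn M) (.lam (.var 0))) := by
  exact cps_simulation_n_by_v_general M (semN_var_eq_zero hM)
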